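/- Let S_1, …, S_k be bounded linear operators on a complex Hilbert space H and let n ≥ 1 be an integer. Then ω( Σ_{i=1}^k S_i )^{2n} ≤ (k^{2n−1}/2) · ‖ Σ_{i=1}^k ( |S_i|^{2n} + |S_i^*|^{2n} ) ‖. -/

import Mathlib

noncomputable section

open ContinuousLinearMap

variable {H : Type*} [NormedAddCommGroup H] [InnerProductSpace ℂ H] [CompleteSpace H]

/-- The numerical radius: `ω(T) := sup {|⟨T x, x⟩| : ‖x‖ = 1}`. -/
def nrad (T : H →L[ℂ] H) : ℝ :=
  sSup {c : ℝ | ∃ x : H, ‖x‖ = 1 ∧ c = ‖(inner ℂ (T x) x : ℂ)‖}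

/-- `R` is the absolute value `|X| = (X* X)^{1/2}` of `X`, i.e. the positive square root
of `X* X`. -/
def IsAbsOf (X R : H →L[ℂ] H) : Prop :=
  R.IsPositive ∧ R * R = adjoint X * X

/-- Log-convexity of `m ↦ ‖R ^ m x‖` for self-adjoint `R`. -/
lemma norm_pow_succ_apply_sq_le {R : H →L[ℂ] H} (hR : IsSelfAdjoint R) (x : H) (m : ℕ) :
    ‖(R ^ (m + 1)) x‖ ^ 2 ≤ ‖(R ^ (m + 2)) x‖ * ‖(R ^ m) x‖ := by
  have hinner : inner ℂ ((R ^ (m + 1)) x) ((R ^ (m + 1)) x)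
      = inner ℂ ((R ^ (m + 2)) x) ((R ^ m) x) := by
    have hsymm := hR.isSymmetric ((R ^ (m + 1)) x) ((R ^ m) x)
    simp only [ContinuousLinearMap.coe_coe] at hsymm
    rw [pow_succ' R (m + 1), mul_def, comp_apply, hsymm]
    rw [pow_succ' R m, mul_def, comp_apply]
  have hle := norm_inner_le_norm (𝕜 := ℂ) ((R ^ (m + 2)) x) ((R ^ m) x)
  rw [← hinner, inner_self_eq_norm_sq_to_K] at hle
  simpa using hle

lemma norm_pow_apply_mul_norm_le {R : H →L[ℂ] H} (hR : IsSelfAdjoint R) {x : H}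
    (hx : ‖x‖ = 1) (m : ℕ) : ‖(R ^ m) x‖ * ‖R x‖ ≤ ‖(R ^ (m + 1)) x‖ := by
  induction m with
  | zero => simp [hx]
  | succ m ih =>
    have hconv := norm_pow_succ_apply_sq_le hR x m
    rcases (norm_nonneg ((R ^ (m + 1)) x)).eq_or_lt with h0 | hpos
    · rw [← h0, zero_mul]
      exact norm_nonneg _
    · refine le_of_mul_le_mul_left ?_ hpos
      nlinarith [mul_le_mul_of_nonneg_right hconv (norm_nonneg (R x)),
        mul_le_mul_of_nonneg_left ih (norm_nonneg ((R ^ (m + 2)) x))]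

lemma norm_apply_pow_le {R : H →L[ℂ] H} (hR : IsSelfAdjoint R) {x : H}
    (hx : ‖x‖ = 1) (m : ℕ) : ‖R x‖ ^ m ≤ ‖(R ^ m) x‖ := by
  induction m with
  | zero => simp [hx]
  | succ m ih =>
    rw [pow_succ]
    exact (mul_le_mul_of_nonneg_right ih (norm_nonneg _)).trans
      (norm_pow_apply_mul_norm_le hR hx m)

lemma IsAbsOf.norm_apply {X R : H →L[ℂ] H} (h : IsAbsOf X R) (x : H) : ‖R x‖ = ‖X x‖ := by
  have hadj : adjoint R * R = adjoint X * X := by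
    rw [← star_eq_adjoint, h.1.isSelfAdjoint.star_eq, h.2]
  have hR := apply_norm_sq_eq_inner_adjoint_left R x
  have hX := apply_norm_sq_eq_inner_adjoint_left X x
  rw [← mul_def, hadj, mul_def, ← hX] at hR
  exact (sq_eq_sq₀ (norm_nonneg _) (norm_nonneg _)).1 hR

/-- A McCarthy-type inequality: `‖X x‖ ^ (2 n) ≤ ⟨|X| ^ (2 n) x, x⟩` for unit vectors `x`. -/
lemma IsAbsOf.norm_apply_pow_le_re_inner {X R : H →L[ℂ] H} (h : IsAbsOf X R) {x : H}
    (hx : ‖x‖ = 1) (n : ℕ) : ‖X x‖ ^ (2 * n) ≤ (inner ℂ ((R ^ (2 * n)) x) x).re := by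
  have hself := h.1.isSelfAdjoint
  have hinner : (inner ℂ ((R ^ (2 * n)) x) x).re = ‖(R ^ n) x‖ ^ 2 := by
    have hadj : adjoint (R ^ n) = R ^ n := (hself.pow n).star_eq
    have hsq := apply_norm_sq_eq_inner_adjoint_left (R ^ n) x
    rw [hadj, ← mul_def, ← pow_add, ← two_mul] at hsq
    exact hsq.symm
  rw [hinner, ← h.norm_apply, mul_comm, pow_mul]
  exact pow_le_pow_left₀ (by positivity) (norm_apply_pow_le hself hx n) 2

lemma norm_inner_pow_le {X R R' : H →L[ℂ] H} (h : IsAbsOf X R) (h' : IsAbsOf (adjoint X) R')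
    {x : H} (hx : ‖x‖ = 1) (n : ℕ) :
    ‖(inner ℂ (X x) x : ℂ)‖ ^ (2 * n) ≤
      (inner ℂ ((R ^ (2 * n) + R' ^ (2 * n)) x) x).re / 2 := by
  have hX : ‖(inner ℂ (X x) x : ℂ)‖ ≤ ‖X x‖ := by
    simpa [hx] using norm_inner_le_norm (𝕜 := ℂ) (X x) x
  have hX' : ‖(inner ℂ (X x) x : ℂ)‖ ≤ ‖adjoint X x‖ := by
    rw [← adjoint_inner_right]
    simpa [hx] using norm_inner_le_norm (𝕜 := ℂ) x (adjoint X x)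
  have hpow := (pow_le_pow_left₀ (norm_nonneg _) hX (2 * n)).trans
    (h.norm_apply_pow_le_re_inner hx n)
  have hpow' := (pow_le_pow_left₀ (norm_nonneg _) hX' (2 * n)).trans
    (h'.norm_apply_pow_le_re_inner hx n)
  rw [add_apply, inner_add_left, Complex.add_re]
  linarith

lemma nrad_pow_le {T : H →L[ℂ] H} {m : ℕ} (hm : m ≠ 0) {C : ℝ} (hC : 0 ≤ C)
    (h : ∀ x : H, ‖x‖ = 1 → ‖(inner ℂ (T x) x : ℂ)‖ ^ m ≤ C) : nrad T ^ m ≤ C := by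
  have hroot : (C ^ (m : ℝ)⁻¹) ^ m = C := Real.rpow_inv_natCast_pow hC hm
  have hroot_nonneg : 0 ≤ C ^ (m : ℝ)⁻¹ := Real.rpow_nonneg hC _
  have hnonneg : 0 ≤ nrad T := Real.sSup_nonneg (by rintro _ ⟨x, -, rfl⟩; exact norm_nonneg _)
  rw [← hroot]
  refine pow_le_pow_left₀ hnonneg (Real.sSup_le ?_ hroot_nonneg) m
  rintro _ ⟨x, hx, rfl⟩
  refine (pow_le_pow_iff_left₀ (norm_nonneg _) hroot_nonneg hm).1 ?_
  rw [hroot]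
  exact h x hx

theorem stmt18 (k : ℕ) (hk : 1 ≤ k) (n : ℕ) (hn : 1 ≤ n)
    (S absS absSstar : Fin k → (H →L[ℂ] H))
    (habs : ∀ i, IsAbsOf (S i) (absS i))
    (habsStar : ∀ i, IsAbsOf (adjoint (S i)) (absSstar i)) :
    nrad (∑ i, S i) ^ (2 * n) ≤
      ((k : ℝ) ^ (2 * n - 1) / 2) *
        ‖∑ i, ((absS i) ^ (2 * n) + (absSstar i) ^ (2 * n))‖ := by
  refine nrad_pow_le (by omega) (by positivity) fun x hx => ?_
  set A := fun i => absS i ^ (2 * n) + absSstar i ^ (2 * n)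
  have hpowerMean : (∑ i, ‖(inner ℂ (S i x) x : ℂ)‖) ^ (2 * n) ≤
      (k : ℝ) ^ (2 * n - 1) * ∑ i, ‖(inner ℂ (S i x) x : ℂ)‖ ^ (2 * n) := by
    have hmean := pow_sum_div_card_le_sum_pow (s := Finset.univ)
      (f := fun i => ‖(inner ℂ (S i x) x : ℂ)‖) (fun i _ => norm_nonneg _) (2 * n - 1)
    have hk_pos : (0 : ℝ) < k := by exact_mod_cast hk
    rwa [Finset.card_univ, Fintype.card_fin, div_le_iff₀' (by positivity),
      show 2 * n - 1 + 1 = 2 * n by omega] at hmean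
  have hsum : ∑ i, ‖(inner ℂ (S i x) x : ℂ)‖ ^ (2 * n) ≤ ‖∑ i, A i‖ / 2 := by
    calc ∑ i, ‖(inner ℂ (S i x) x : ℂ)‖ ^ (2 * n)
        ≤ ∑ i, (inner ℂ (A i x) x).re / 2 :=
          Finset.sum_le_sum fun i _ => norm_inner_pow_le (habs i) (habsStar i) hx n
      _ = (inner ℂ ((∑ i, A i) x) x).re / 2 := by
          rw [← Finset.sum_div, sum_apply, sum_inner, Complex.re_sum]
      _ ≤ ‖∑ i, A i‖ / 2 := by
          have hop := ((∑ i, A i).le_opNorm x)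
          rw [hx, mul_one] at hop
          have hre := re_inner_le_norm (𝕜 := ℂ) ((∑ i, A i) x) x
          rw [hx, mul_one] at hre
          exact div_le_div_of_nonneg_right (hre.trans hop) zero_le_two
  calc ‖(inner ℂ ((∑ i, S i) x) x : ℂ)‖ ^ (2 * n)
      ≤ (∑ i, ‖(inner ℂ (S i x) x : ℂ)‖) ^ (2 * n) := by
        rw [sum_apply, sum_inner]
        exact pow_le_pow_left₀ (norm_nonneg _) (norm_sum_le _ _) _
    _ ≤ (k : ℝ) ^ (2 * n - 1) * ∑ i, ‖(inner ℂ (S i x) x : ℂ)‖ ^ (2 * n) := hpowerMean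
    _ ≤ (k : ℝ) ^ (2 * n - 1) * (‖∑ i, A i‖ / 2) := by gcongr
    _ = (k : ℝ) ^ (2 * n - 1) / 2 * ‖∑ i, A i‖ := by ring
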